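/- Under the Hamiltonian flow setup, there exist constants c₀ > 0, ε > 0, and C ≥ 1, depending only on n and the constants C_α, such that if in addition ‖a^{ij} − δ_{ij}‖_{C²(ℝ^n)} ≤ c₀, then for all μ ≥ 1, all 0 < t ≤ ε μ^{-1}, every x ∈ ℝ^n and all ξ, η ∈ ℝ^n with μ/4 ≤ |ξ| ≤ 4μ and μ/4 ≤ |η| ≤ 4μ, one has C^{-1} t |ξ − η| ≤ | z_t(x,ξ) − z_t(x,η) | ≤ C t |ξ − η|. -/

import Mathlib

open MeasureTheory Complex Real
open scoped ENNReal NNReal RealInnerProductSpace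

noncomputable section

/-- Euclidean space `ℝ^n`. -/
abbrev En (n : ℕ) := EuclideanSpace ℝ (Fin n)

/-- The `i`-th coordinate vector of `ℝ^n`. -/
def ev {n : ℕ} (i : Fin n) : En n := EuclideanSpace.single i (1 : ℝ)

/-- The Hamiltonian `a(z,ζ) = Σᵢⱼ aⁱʲ(z) ζᵢ ζⱼ` on phase space `ℝ^n × ℝ^n`. -/
def ham {n : ℕ} (a : Fin n → Fin n → En n → ℝ) (w : En n × En n) : ℝ :=
  ∑ i, ∑ j, a i j w.1 * w.2 i * w.2 j

/-- The Hamiltonian vector field `(d_ζ a, −d_z a)` of `ham a`. -/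
def hamField {n : ℕ} (a : Fin n → Fin n → En n → ℝ) (w : En n × En n) :
    En n × En n :=
  (gradient (fun ζ => ham a (w.1, ζ)) w.2, -gradient (fun z => ham a (z, w.2)) w.1)

/-- `χ` is the flow of Hamilton's equations `∂ₜ z = d_ζ a`, `∂ₜ ζ = −d_z a`
with `χ 0 = id`. -/
def IsHamFlow {n : ℕ} (a : Fin n → Fin n → En n → ℝ)
    (χ : ℝ → En n × En n → En n × En n) : Prop :=
  (∀ w, χ 0 w = w) ∧ ∀ w t, HasDerivAt (fun s => χ s w) (hamField a (χ t w)) t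

/-- The coefficient hypotheses of the Hamiltonian flow setup: `aⁱʲ` smooth symmetric,
`‖aⁱʲ − δᵢⱼ‖_{C²} ≤ 1`, and `|∂^α aⁱʲ| ≤ C_α μ^{max(0,|α|−2)/2}` for every order `|α|`. -/
def HamSetup {n : ℕ} (μ : ℝ) (Cα : ℕ → ℝ) (a : Fin n → Fin n → En n → ℝ) : Prop :=
  (∀ i j, ContDiff ℝ (⊤ : ℕ∞) (a i j)) ∧ (∀ i j, a i j = a j i) ∧
    (∀ i j x, |a i j x - (if i = j then (1 : ℝ) else 0)| + ‖fderiv ℝ (a i j) x‖ +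
      ‖iteratedFDeriv ℝ 2 (a i j) x‖ ≤ 1) ∧
    ∀ i j (k : ℕ) x, ‖iteratedFDeriv ℝ k (a i j) x‖ ≤
      Cα k * μ ^ (max 0 ((k : ℝ) - 2) / 2)

/-!
The separation `(Z, W)` of two trajectories from the same point solves a perturbation of the
Euclidean system `Z' = 2 W`, `W' = 0`. Conservation of energy keeps both momenta below some
`R ≲ μ`, and then closeness of the coefficients to `δᵢⱼ` in `C²` bounds the errors in `Z'` and
`R⁻¹ W'` by a small multiple of `max (R ‖Z‖) ‖W‖`. Over times `t ≲ R⁻¹` Grönwall's inequality bounds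
this maximum by `2 ‖W 0‖`; integrating, `Z t` differs from `2 t W 0` by at most `t ‖W 0‖`.
-/

section Pairs

variable {E F : Type*} [NormedAddCommGroup E] [NormedSpace ℝ E] [NormedAddCommGroup F]
  [NormedSpace ℝ F] {γ : ℝ → E × F} {γ' : E × F} {t : ℝ}

lemma hasDerivAt_fst_comp (h : HasDerivAt γ γ' t) : HasDerivAt (fun s => (γ s).1) γ'.1 t :=
  (ContinuousLinearMap.fst ℝ E F).hasFDerivAt.comp_hasDerivAt t h

lemma hasDerivAt_snd_comp (h : HasDerivAt γ γ' t) : HasDerivAt (fun s => (γ s).2) γ'.2 t :=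
  (ContinuousLinearMap.snd ℝ E F).hasFDerivAt.comp_hasDerivAt t h

end Pairs

section Separation

variable {E : Type*} [NormedAddCommGroup E] [NormedSpace ℝ E]

lemma norm_le_two_mul_norm_zero_of_norm_deriv_le {f f' : ℝ → E} {K t : ℝ}
    (hf : ∀ s ∈ Set.Icc 0 t, HasDerivAt f (f' s) s)
    (hf' : ∀ s ∈ Set.Icc 0 t, ‖f' s‖ ≤ K * ‖f s‖) (hK : 0 ≤ K) (hKt : K * t ≤ Real.log 2) :
    ∀ s ∈ Set.Icc 0 t, ‖f s‖ ≤ 2 * ‖f 0‖ := by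
  intro s hs
  have gronwall := norm_le_gronwallBound_of_norm_deriv_right_le (ε := 0)
    (fun s hs => (hf s hs).continuousAt.continuousWithinAt)
    (fun s hs => (hf s ⟨hs.1, hs.2.le⟩).hasDerivWithinAt) le_rfl
    (fun s hs => (hf' s ⟨hs.1, hs.2.le⟩).trans_eq (add_zero _).symm) s hs
  rw [gronwallBound_ε0, sub_zero] at gronwall
  have exp_le_two : Real.exp (K * s) ≤ 2 := by
    rw [← Real.le_log_iff_exp_le two_pos]
    exact (mul_le_mul_of_nonneg_left hs.2 hK).trans hKt
  calc ‖f s‖ ≤ ‖f 0‖ * Real.exp (K * s) := gronwall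
    _ ≤ ‖f 0‖ * 2 := by gcongr
    _ = 2 * ‖f 0‖ := mul_comm _ _

variable {Z W Z' W' : ℝ → E} {R t : ℝ}

lemma max_norm_le_two_mul_norm_zero (hR : 0 ≤ R) (htR : t * R ≤ 1 / 4)
    (hZ : ∀ s ∈ Set.Icc 0 t, HasDerivAt Z (Z' s) s)
    (hW : ∀ s ∈ Set.Icc 0 t, HasDerivAt W (W' s) s) (hZ0 : Z 0 = 0)
    (hZ' : ∀ s ∈ Set.Icc 0 t, ‖Z' s - (2 : ℝ) • W s‖ ≤ 1 / 4 * max (R * ‖Z s‖) ‖W s‖)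
    (hW' : ∀ s ∈ Set.Icc 0 t, ‖W' s‖ ≤ R / 4 * max (R * ‖Z s‖) ‖W s‖) :
    ∀ s ∈ Set.Icc 0 t, max (R * ‖Z s‖) ‖W s‖ ≤ 2 * ‖W 0‖ := by
  have norm_pair (z w : E) : ‖(R • z, w)‖ = max (R * ‖z‖) ‖w‖ := by
    rw [Prod.norm_mk, norm_smul, Real.norm_of_nonneg hR]
  have norm_Z'_le : ∀ s ∈ Set.Icc 0 t, ‖Z' s‖ ≤ 9 / 4 * max (R * ‖Z s‖) ‖W s‖ := by
    intro s hs
    have triangle := norm_le_norm_sub_add (Z' s) ((2 : ℝ) • W s)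
    rw [norm_smul, Real.norm_of_nonneg zero_le_two] at triangle
    linarith [hZ' s hs, le_max_right (R * ‖Z s‖) ‖W s‖]
  have norm_pair'_le : ∀ s ∈ Set.Icc 0 t,
      ‖(R • Z' s, W' s)‖ ≤ 9 / 4 * R * ‖(R • Z s, W s)‖ := by
    intro s hs
    rw [norm_pair, norm_pair]
    refine max_le ?_ ((hW' s hs).trans ?_)
    · calc R * ‖Z' s‖ ≤ R * (9 / 4 * max (R * ‖Z s‖) ‖W s‖) := by gcongr; exact norm_Z'_le s hs
        _ = 9 / 4 * R * max (R * ‖Z s‖) ‖W s‖ := by ring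
    · gcongr
      linarith
  intro s hs
  have growth := norm_le_two_mul_norm_zero_of_norm_deriv_le (f := fun s => (R • Z s, W s))
    (fun s hs => ((hZ s hs).const_smul R).prodMk (hW s hs)) norm_pair'_le (by positivity)
    (by linarith [Real.log_two_gt_d9]) s hs
  simpa [norm_pair, hZ0] using growth

lemma norm_sub_two_mul_smul_le (hR : 0 ≤ R) (ht : 0 ≤ t) (htR : t * R ≤ 1 / 4)
    (hZ : ∀ s ∈ Set.Icc 0 t, HasDerivAt Z (Z' s) s)
    (hW : ∀ s ∈ Set.Icc 0 t, HasDerivAt W (W' s) s) (hZ0 : Z 0 = 0)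
    (hZ' : ∀ s ∈ Set.Icc 0 t, ‖Z' s - (2 : ℝ) • W s‖ ≤ 1 / 4 * max (R * ‖Z s‖) ‖W s‖)
    (hW' : ∀ s ∈ Set.Icc 0 t, ‖W' s‖ ≤ R / 4 * max (R * ‖Z s‖) ‖W s‖) :
    ‖Z t - (2 * t) • W 0‖ ≤ t * ‖W 0‖ := by
  have growth := max_norm_le_two_mul_norm_zero hR htR hZ hW hZ0 hZ' hW'
  have drift : ∀ s ∈ Set.Icc 0 t, ‖W s - W 0‖ ≤ 1 / 8 * ‖W 0‖ := by
    intro s hs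
    have mean_value := norm_image_sub_le_of_norm_deriv_le_segment' (C := R / 4 * (2 * ‖W 0‖))
      (fun s hs => (hW s hs).hasDerivWithinAt)
      (fun s hs => (hW' s ⟨hs.1, hs.2.le⟩).trans
        (by gcongr; exact growth s ⟨hs.1, hs.2.le⟩)) s hs
    have hsR : s * R ≤ 1 / 4 := (mul_le_mul_of_nonneg_right hs.2 hR).trans htR
    calc ‖W s - W 0‖ ≤ s * R * (‖W 0‖ / 2) := by linarith
      _ ≤ 1 / 4 * (‖W 0‖ / 2) := by gcongr
      _ = 1 / 8 * ‖W 0‖ := by ring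
  have hasDerivAt_error : ∀ s ∈ Set.Icc 0 t,
      HasDerivAt (fun s => Z s - (2 * s) • W 0) (Z' s - (2 : ℝ) • W 0) s := fun s hs => by
    simpa using (hZ s hs).fun_sub (((hasDerivAt_id s).const_mul 2).smul_const (W 0))
  have norm_error'_le : ∀ s ∈ Set.Icc 0 t, ‖Z' s - (2 : ℝ) • W 0‖ ≤ ‖W 0‖ := fun s hs =>
    calc ‖Z' s - (2 : ℝ) • W 0‖
        ≤ ‖Z' s - (2 : ℝ) • W s‖ + ‖(2 : ℝ) • W s - (2 : ℝ) • W 0‖ :=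
          norm_sub_le_norm_sub_add_norm_sub _ _ _
      _ = ‖Z' s - (2 : ℝ) • W s‖ + 2 * ‖W s - W 0‖ := by
        rw [← smul_sub, norm_smul, Real.norm_of_nonneg zero_le_two]
      _ ≤ ‖W 0‖ := by linarith [hZ' s hs, growth s hs, drift s hs, norm_nonneg (W 0)]
  have mean_value := norm_image_sub_le_of_norm_deriv_le_segment'
    (fun s hs => (hasDerivAt_error s hs).hasDerivWithinAt)
    (fun s hs => norm_error'_le s ⟨hs.1, hs.2.le⟩) t ⟨ht, le_rfl⟩
  simpa [hZ0, mul_comm] using mean_value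

end Separation

section HamiltonianField

variable {E : Type*} [NormedAddCommGroup E] [InnerProductSpace ℝ E]

lemma norm_le_of_forall_abs_inner_le {v : E} {M : ℝ} (hM : 0 ≤ M)
    (h : ∀ k : E, |⟪v, k⟫| ≤ M * ‖k‖) : ‖v‖ ≤ M := by
  rw [← innerSL_apply_norm (𝕜 := ℝ)]
  exact ContinuousLinearMap.opNorm_le_bound _ hM h

variable [CompleteSpace E]

/-- The Hamiltonian vector field `(∂_ζ H, -∂_z H)` of a function `H` on the phase space `E × E`;
`hamField a` is the case `H = ham a`. -/
def hamiltonianField (H : E × E → ℝ) (w : E × E) : E × E :=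
  (gradient (fun ζ => H (w.1, ζ)) w.2, -gradient (fun z => H (z, w.2)) w.1)

lemma fderiv_hamiltonianField_eq_zero {H : E × E → ℝ} {w : E × E}
    (hH : DifferentiableAt ℝ H w) : fderiv ℝ H w (hamiltonianField H w) = 0 := by
  have fderiv_fst (v : E) : fderiv ℝ (fun z => H (z, w.2)) w.1 v = fderiv ℝ H w (v, 0) := by
    have h : HasFDerivAt (fun z => H (z, w.2)) _ w.1 :=
      HasFDerivAt.comp w.1 hH.hasFDerivAt (hasFDerivAt_prodMk_left w.1 w.2)
    rw [h.fderiv, ContinuousLinearMap.comp_apply, ContinuousLinearMap.inl_apply]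
  have fderiv_snd (v : E) : fderiv ℝ (fun ζ => H (w.1, ζ)) w.2 v = fderiv ℝ H w (0, v) := by
    have h : HasFDerivAt (fun ζ => H (w.1, ζ)) _ w.2 :=
      HasFDerivAt.comp w.2 hH.hasFDerivAt (hasFDerivAt_prodMk_right w.1 w.2)
    rw [h.fderiv, ContinuousLinearMap.comp_apply, ContinuousLinearMap.inr_apply]
  set v := hamiltonianField H w with hv
  calc fderiv ℝ H w v = fderiv ℝ H w (v.1, 0) + fderiv ℝ H w (0, v.2) := by
        rw [← map_add, Prod.mk_add_mk, add_zero, zero_add]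
    _ = ⟪-v.2, v.1⟫ + ⟪v.1, v.2⟫ := by
        rw [← fderiv_fst, ← fderiv_snd, ← inner_gradient_left, ← inner_gradient_left]
        simp only [hv, hamiltonianField, neg_neg]
    _ = 0 := by rw [inner_neg_left, real_inner_comm, neg_add_cancel]

lemma hamiltonian_eq_of_isIntegralCurve {H : E × E → ℝ} (hH : Differentiable ℝ H)
    {γ : ℝ → E × E} (hγ : IsIntegralCurve γ fun _ => hamiltonianField H) (t : ℝ) :
    H (γ t) = H (γ 0) := by
  have hasDerivAt_energy (s : ℝ) : HasDerivAt (H ∘ γ) 0 s := by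
    simpa only [fderiv_hamiltonianField_eq_zero (hH (γ s))] using
      (hH (γ s)).hasFDerivAt.comp_hasDerivAt s (hγ s)
  exact is_const_of_deriv_eq_zero (fun s => (hasDerivAt_energy s).differentiableAt)
    (fun s => (hasDerivAt_energy s).deriv) t 0

end HamiltonianField

section QuadraticHamiltonian

-- Instance search needs this depth for trilinear maps `E →L[ℝ] E →L[ℝ] E →L[ℝ] ℝ`.
set_option maxSynthPendingDepth 3

variable {E : Type*} [NormedAddCommGroup E] [NormedSpace ℝ E] {A : E → E →L[ℝ] E →L[ℝ] ℝ}

/-- The Hamiltonian `A(z)(ζ, ζ)` on phase space of a field `A` of bilinear forms. -/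
def quadHam (A : E → E →L[ℝ] E →L[ℝ] ℝ) (w : E × E) : ℝ :=
  A w.1 w.2 w.2

lemma fderiv_quadHam_snd (z ζ k : E) :
    fderiv ℝ (fun ζ => quadHam A (z, ζ)) ζ k = A z k ζ + A z ζ k := by
  have h : HasFDerivAt (fun ζ => quadHam A (z, ζ)) _ ζ :=
    (A z).hasFDerivAt.clm_apply (hasFDerivAt_id ζ)
  simp [h.fderiv, add_comm]

lemma fderiv_quadHam_fst (hA : Differentiable ℝ A) (z ζ k : E) :
    fderiv ℝ (fun z => quadHam A (z, ζ)) z k = fderiv ℝ A z k ζ ζ := by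
  have h : HasFDerivAt (fun z => quadHam A (z, ζ)) _ z :=
    ((hA z).hasFDerivAt.clm_apply (hasFDerivAt_const ζ z)).clm_apply (hasFDerivAt_const ζ z)
  simp [h.fderiv]

lemma differentiable_quadHam (hA : Differentiable ℝ A) : Differentiable ℝ (quadHam A) := by
  unfold quadHam
  fun_prop

end QuadraticHamiltonian

section NearEuclidean

set_option maxSynthPendingDepth 3

variable {E : Type*} [NormedAddCommGroup E] [InnerProductSpace ℝ E]
  {A : E → E →L[ℝ] E →L[ℝ] ℝ} {κ R : ℝ}

/-- A field of bilinear forms is `κ`-close to the inner product in `C^{1,1}`, the bound on the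
second derivative being replaced by a Lipschitz bound on the first. -/
structure IsNearEuclidean (A : E → E →L[ℝ] E →L[ℝ] ℝ) (κ : ℝ) : Prop where
  differentiable : Differentiable ℝ A
  abs_sub_inner_le : ∀ z v w, |A z v w - ⟪v, w⟫| ≤ κ * ‖v‖ * ‖w‖
  norm_fderiv_le : ∀ z, ‖fderiv ℝ A z‖ ≤ κ
  norm_fderiv_sub_le : ∀ z z', ‖fderiv ℝ A z - fderiv ℝ A z'‖ ≤ κ * ‖z - z'‖

namespace IsNearEuclidean

lemma nonneg (hA : IsNearEuclidean A κ) : 0 ≤ κ :=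
  (norm_nonneg _).trans (hA.norm_fderiv_le 0)

lemma norm_sub_le (hA : IsNearEuclidean A κ) (z z' : E) : ‖A z - A z'‖ ≤ κ * ‖z - z'‖ :=
  convex_univ.norm_image_sub_le_of_norm_fderiv_le (fun z _ => hA.differentiable z)
    (fun z _ => hA.norm_fderiv_le z) (Set.mem_univ z') (Set.mem_univ z)

lemma abs_quadHam_sub_sq_norm_le (hA : IsNearEuclidean A κ) (w : E × E) :
    |quadHam A w - ‖w.2‖ ^ 2| ≤ κ * ‖w.2‖ ^ 2 := by
  simpa only [quadHam, real_inner_self_eq_norm_sq, mul_assoc, ← sq] using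
    hA.abs_sub_inner_le w.1 w.2 w.2

variable [CompleteSpace E]

lemma norm_snd_le_two_mul (hA : IsNearEuclidean A κ) (hκ : κ ≤ 1 / 2) {γ : ℝ → E × E}
    (hγ : IsIntegralCurve γ fun _ => hamiltonianField (quadHam A)) (t : ℝ) :
    ‖(γ t).2‖ ≤ 2 * ‖(γ 0).2‖ := by
  have energy := hamiltonian_eq_of_isIntegralCurve (differentiable_quadHam hA.differentiable) hγ t
  have lower := (abs_le.1 (hA.abs_quadHam_sub_sq_norm_le (γ t))).1
  have upper := (abs_le.1 (hA.abs_quadHam_sub_sq_norm_le (γ 0))).2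
  have hκt : κ * ‖(γ t).2‖ ^ 2 ≤ 1 / 2 * ‖(γ t).2‖ ^ 2 := by gcongr
  have hκ0 : κ * ‖(γ 0).2‖ ^ 2 ≤ 1 / 2 * ‖(γ 0).2‖ ^ 2 := by gcongr
  refine le_of_sq_le_sq ?_ (by positivity)
  linarith [sq_nonneg ‖(γ 0).2‖]

lemma norm_hamiltonianField_fst_sub_le (hA : IsNearEuclidean A κ) {p q : E × E}
    (hq : ‖q.2‖ ≤ R) :
    ‖(hamiltonianField (quadHam A) p).1 - (hamiltonianField (quadHam A) q).1 -
        (2 : ℝ) • (p.2 - q.2)‖ ≤ 4 * κ * max (R * ‖p.1 - q.1‖) ‖p.2 - q.2‖ := by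
  have hκ := hA.nonneg
  set δ := p.2 - q.2 with hδ
  set m := max (R * ‖p.1 - q.1‖) ‖δ‖
  refine norm_le_of_forall_abs_inner_le (by positivity) fun k => ?_
  have expand : ⟪(hamiltonianField (quadHam A) p).1 - (hamiltonianField (quadHam A) q).1 -
      (2 : ℝ) • δ, k⟫ = (A p.1 k δ - ⟪k, δ⟫) + (A p.1 δ k - ⟪δ, k⟫) +
        ((A p.1 - A q.1) k q.2 + (A p.1 - A q.1) q.2 k) := by
    simp only [hamiltonianField, inner_sub_left, real_inner_smul_left, inner_gradient_left,
      fderiv_quadHam_snd, real_inner_comm _ k, hδ, map_sub, sub_apply]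
    ring
  have momentum_term : κ * ‖δ‖ * ‖k‖ ≤ κ * m * ‖k‖ := by gcongr; exact le_max_right _ _
  have position_term : κ * ‖p.1 - q.1‖ * ‖q.2‖ * ‖k‖ ≤ κ * m * ‖k‖ :=
    calc κ * ‖p.1 - q.1‖ * ‖q.2‖ * ‖k‖ ≤ κ * ‖p.1 - q.1‖ * R * ‖k‖ := by gcongr
      _ = κ * (R * ‖p.1 - q.1‖) * ‖k‖ := by ring
      _ ≤ κ * m * ‖k‖ := by gcongr; exact le_max_left _ _
  have position_form (v w : E) : |(A p.1 - A q.1) v w| ≤ κ * ‖p.1 - q.1‖ * ‖v‖ * ‖w‖ :=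
    ((A p.1 - A q.1).le_opNorm₂ v w).trans (by gcongr; exact hA.norm_sub_le _ _)
  rw [expand]
  refine (abs_add_le _ _).trans ((add_le_add (abs_add_le _ _) (abs_add_le _ _)).trans ?_)
  linarith [hA.abs_sub_inner_le p.1 k δ, hA.abs_sub_inner_le p.1 δ k, position_form k q.2,
    position_form q.2 k]

lemma norm_hamiltonianField_snd_sub_le (hA : IsNearEuclidean A κ) {p q : E × E}
    (hp : ‖p.2‖ ≤ R) (hq : ‖q.2‖ ≤ R) :
    ‖(hamiltonianField (quadHam A) p).2 - (hamiltonianField (quadHam A) q).2‖ ≤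
      3 * κ * R * max (R * ‖p.1 - q.1‖) ‖p.2 - q.2‖ := by
  have hκ := hA.nonneg
  have hR : 0 ≤ R := (norm_nonneg _).trans hp
  set δ := p.2 - q.2 with hδ
  set m := max (R * ‖p.1 - q.1‖) ‖δ‖
  rw [norm_sub_rev]
  refine norm_le_of_forall_abs_inner_le (by positivity) fun k => ?_
  have expand : ⟪(hamiltonianField (quadHam A) q).2 - (hamiltonianField (quadHam A) p).2, k⟫ =
      (fderiv ℝ A p.1 - fderiv ℝ A q.1) k p.2 p.2 + fderiv ℝ A q.1 k δ p.2 +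
        fderiv ℝ A q.1 k q.2 δ := by
    simp only [hamiltonianField, inner_sub_left, inner_neg_left, inner_gradient_left,
      fderiv_quadHam_fst hA.differentiable, hδ, map_sub, sub_apply]
    ring
  have trilinear {T : E →L[ℝ] E →L[ℝ] E →L[ℝ] ℝ} {M r r' : ℝ} {v w : E} (hT : ‖T‖ ≤ M)
      (hv : ‖v‖ ≤ r) (hw : ‖w‖ ≤ r') : |T k v w| ≤ M * ‖k‖ * r * r' :=
    (T k).le_of_opNorm₂_le_of_le (T.le_of_opNorm_le hT k) hv hw
  have momentum_term : ‖δ‖ ≤ m := le_max_right _ _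
  have position_term : κ * ‖p.1 - q.1‖ * ‖k‖ * R * R ≤ κ * ‖k‖ * R * m :=
    calc κ * ‖p.1 - q.1‖ * ‖k‖ * R * R = κ * ‖k‖ * R * (R * ‖p.1 - q.1‖) := by ring
      _ ≤ κ * ‖k‖ * R * m := by gcongr; exact le_max_left _ _
  rw [expand]
  refine (abs_add_three _ _ _).trans ?_
  linarith [trilinear (hA.norm_fderiv_sub_le p.1 q.1) hp hp,
    trilinear (hA.norm_fderiv_le q.1) momentum_term hp,
    trilinear (hA.norm_fderiv_le q.1) hq momentum_term]

theorem norm_fst_sub_sub_two_mul_smul_le (hA : IsNearEuclidean A κ) (hκ : κ ≤ 1 / 16)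
    {γ₁ γ₂ : ℝ → E × E}
    (hγ₁ : IsIntegralCurve γ₁ fun _ => hamiltonianField (quadHam A))
    (hγ₂ : IsIntegralCurve γ₂ fun _ => hamiltonianField (quadHam A))
    (h_fst : (γ₁ 0).1 = (γ₂ 0).1) (h₁ : 2 * ‖(γ₁ 0).2‖ ≤ R) (h₂ : 2 * ‖(γ₂ 0).2‖ ≤ R)
    {t : ℝ} (ht : 0 ≤ t) (htR : t * R ≤ 1 / 4) :
    ‖(γ₁ t).1 - (γ₂ t).1 - (2 * t) • ((γ₁ 0).2 - (γ₂ 0).2)‖ ≤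
      t * ‖(γ₁ 0).2 - (γ₂ 0).2‖ := by
  have hR : 0 ≤ R := le_trans (by positivity) h₁
  have hγ₁R (s : ℝ) : ‖(γ₁ s).2‖ ≤ R :=
    (hA.norm_snd_le_two_mul (by linarith) hγ₁ s).trans h₁
  have hγ₂R (s : ℝ) : ‖(γ₂ s).2‖ ≤ R :=
    (hA.norm_snd_le_two_mul (by linarith) hγ₂ s).trans h₂
  exact norm_sub_two_mul_smul_le (Z := fun s => (γ₁ s).1 - (γ₂ s).1)
    (W := fun s => (γ₁ s).2 - (γ₂ s).2) hR ht htR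
    (fun s _ => (hasDerivAt_fst_comp (hγ₁ s)).sub (hasDerivAt_fst_comp (hγ₂ s)))
    (fun s _ => (hasDerivAt_snd_comp (hγ₁ s)).sub (hasDerivAt_snd_comp (hγ₂ s)))
    (sub_eq_zero.2 h_fst)
    (fun s _ => (hA.norm_hamiltonianField_fst_sub_le (hγ₂R s)).trans
      (by gcongr; linarith))
    (fun s _ => (hA.norm_hamiltonianField_snd_sub_le (hγ₁R s) (hγ₂R s)).trans
      (by gcongr; nlinarith))

end IsNearEuclidean

end NearEuclidean

section Coordinates

set_option maxSynthPendingDepth 3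

lemma norm_sum_sum_le {ι F : Type*} [Fintype ι] [SeminormedAddCommGroup F] {f : ι → ι → F}
    {B : ℝ} (h : ∀ i j, ‖f i j‖ ≤ B) : ‖∑ i, ∑ j, f i j‖ ≤ (Fintype.card ι : ℝ) ^ 2 * B :=
  calc ‖∑ i, ∑ j, f i j‖ ≤ ∑ _i : ι, ∑ _j : ι, B :=
        norm_sum_le_of_le _ fun i _ => norm_sum_le_of_le _ fun j _ => h i j
    _ = (Fintype.card ι : ℝ) ^ 2 * B := by
        simp only [Finset.sum_const, Finset.card_univ, nsmul_eq_mul]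
        ring

lemma norm_fderiv_sub_le_of_norm_iteratedFDeriv_two_le {E F : Type*} [NormedAddCommGroup E]
    [NormedSpace ℝ E] [NormedAddCommGroup F] [NormedSpace ℝ F] {f : E → F} (hf : ContDiff ℝ 2 f)
    {c : ℝ} (hc : ∀ x, ‖iteratedFDeriv ℝ 2 f x‖ ≤ c) (x y : E) :
    ‖fderiv ℝ f x - fderiv ℝ f y‖ ≤ c * ‖x - y‖ := by
  have hdf : Differentiable ℝ (fderiv ℝ f) :=
    (hf.fderiv_right (m := 1) (by norm_num)).differentiable one_ne_zero
  refine convex_univ.norm_image_sub_le_of_norm_fderiv_le (𝕜 := ℝ) (fun x _ => hdf x)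
    (fun x _ => ?_) (Set.mem_univ y) (Set.mem_univ x)
  rw [← norm_iteratedFDeriv_one, norm_iteratedFDeriv_fderiv]
  exact hc x

variable {n : ℕ} {a : Fin n → Fin n → En n → ℝ}

/-- The bilinear form `(v, w) ↦ vᵢ wⱼ` on `ℝ^n`. -/
def coordForm (i j : Fin n) : En n →L[ℝ] En n →L[ℝ] ℝ :=
  (EuclideanSpace.proj i : En n →L[ℝ] ℝ).smulRight (EuclideanSpace.proj j : En n →L[ℝ] ℝ)

/-- The field of bilinear forms `Σᵢⱼ aⁱʲ(z) vᵢ wⱼ`, whose quadratic Hamiltonian is `ham a`. -/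
def coeffForm (a : Fin n → Fin n → En n → ℝ) (z : En n) : En n →L[ℝ] En n →L[ℝ] ℝ :=
  ∑ i, ∑ j, a i j z • coordForm i j

lemma coordForm_apply (i j : Fin n) (v w : En n) : coordForm i j v w = v i * w j := by
  simp [coordForm]

lemma norm_coordForm_le_one (i j : Fin n) : ‖coordForm i j‖ ≤ 1 := by
  refine ContinuousLinearMap.opNorm_le_bound₂ _ zero_le_one fun v w => ?_
  rw [coordForm_apply, norm_mul, one_mul]
  exact mul_le_mul (PiLp.norm_apply_le v i) (PiLp.norm_apply_le w j) (norm_nonneg _)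
    (norm_nonneg _)

lemma coeffForm_apply (z v w : En n) : coeffForm a z v w = ∑ i, ∑ j, a i j z * v i * w j := by
  simp [coeffForm, coordForm_apply, sum_apply, mul_assoc]

lemma ham_eq_quadHam_coeffForm : ham a = quadHam (coeffForm a) :=
  funext fun w => (coeffForm_apply w.1 w.2 w.2).symm

lemma abs_coeffForm_sub_inner_le {c : ℝ}
    (hc : ∀ i j x, |a i j x - (if i = j then (1 : ℝ) else 0)| ≤ c) (z v w : En n) :
    |coeffForm a z v w - ⟪v, w⟫| ≤ (n : ℝ) ^ 2 * c * ‖v‖ * ‖w‖ := by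
  have inner_eq : ⟪v, w⟫ = ∑ i, ∑ j, (if i = j then (1 : ℝ) else 0) * v i * w j := by
    simp [PiLp.inner_apply, mul_comm]
  have expand : coeffForm a z v w - ⟪v, w⟫ =
      ∑ i, ∑ j, (a i j z - if i = j then (1 : ℝ) else 0) * coordForm i j v w := by
    simp only [coeffForm_apply, inner_eq, coordForm_apply, ← Finset.sum_sub_distrib]
    simp only [sub_mul, mul_assoc]
  have entry_le (i j : Fin n) :
      ‖(a i j z - if i = j then (1 : ℝ) else 0) * coordForm i j v w‖ ≤ c * (1 * ‖v‖ * ‖w‖) := by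
    rw [norm_mul]
    exact mul_le_mul (hc i j z)
      ((coordForm i j).le_of_opNorm₂_le_of_le (norm_coordForm_le_one i j) le_rfl le_rfl)
      (norm_nonneg _) ((abs_nonneg _).trans (hc i j z))
  simpa only [expand, Fintype.card_fin, one_mul, mul_assoc, Real.norm_eq_abs] using
    norm_sum_sum_le entry_le

lemma hasFDerivAt_coeffForm {z : En n} (ha : ∀ i j, DifferentiableAt ℝ (a i j) z) :
    HasFDerivAt (coeffForm a) (∑ i, ∑ j, (fderiv ℝ (a i j) z).smulRight (coordForm i j)) z :=
  HasFDerivAt.fun_sum fun i _ => HasFDerivAt.fun_sum fun j _ =>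
    (ha i j).hasFDerivAt.smul_const (coordForm i j)

lemma norm_sum_sum_smulRight_coordForm_le {T : Fin n → Fin n → En n →L[ℝ] ℝ} {c : ℝ}
    (hT : ∀ i j, ‖T i j‖ ≤ c) :
    ‖∑ i, ∑ j, (T i j).smulRight (coordForm i j)‖ ≤ (n : ℝ) ^ 2 * c := by
  have entry_le (i j : Fin n) : ‖(T i j).smulRight (coordForm i j)‖ ≤ c := by
    rw [ContinuousLinearMap.norm_smulRight_apply]
    exact (mul_le_of_le_one_right (norm_nonneg _) (norm_coordForm_le_one i j)).trans (hT i j)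
  simpa only [Fintype.card_fin] using norm_sum_sum_le entry_le

theorem isNearEuclidean_coeffForm {c : ℝ} (ha : ∀ i j, ContDiff ℝ 2 (a i j))
    (hc : ∀ i j x, |a i j x - (if i = j then (1 : ℝ) else 0)| + ‖fderiv ℝ (a i j) x‖ +
      ‖iteratedFDeriv ℝ 2 (a i j) x‖ ≤ c) :
    IsNearEuclidean (coeffForm a) ((n : ℝ) ^ 2 * c) := by
  have hasFDerivAt_form (z : En n) := hasFDerivAt_coeffForm (z := z) fun i j =>
    (ha i j).differentiable two_ne_zero z
  have lipschitz (i j : Fin n) := norm_fderiv_sub_le_of_norm_iteratedFDeriv_two_le (ha i j)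
    (c := c) fun x => (le_add_of_nonneg_left (by positivity)).trans (hc i j x)
  refine ⟨fun z => (hasFDerivAt_form z).differentiableAt, ?_, fun z => ?_, fun z z' => ?_⟩
  · refine abs_coeffForm_sub_inner_le fun i j x => le_trans ?_ (hc i j x)
    rw [add_assoc]
    exact le_add_of_nonneg_right (by positivity)
  · rw [(hasFDerivAt_form z).fderiv]
    refine norm_sum_sum_smulRight_coordForm_le fun i j => le_trans ?_ (hc i j z)
    rw [add_right_comm]
    exact le_add_of_nonneg_left (by positivity)
  · have fderiv_sub : fderiv ℝ (coeffForm a) z - fderiv ℝ (coeffForm a) z' = ∑ i, ∑ j,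
        (fderiv ℝ (a i j) z - fderiv ℝ (a i j) z').smulRight (coordForm i j) := by
      ext k v w
      simp [(hasFDerivAt_form z).fderiv, (hasFDerivAt_form z').fderiv, sub_mul,
        Finset.sum_sub_distrib, sum_apply]
    rw [fderiv_sub, mul_assoc]
    exact norm_sum_sum_smulRight_coordForm_le fun i j => lipschitz i j z z'

lemma isIntegralCurve_of_isHamFlow {χ : ℝ → En n × En n → En n × En n} (hχ : IsHamFlow a χ)
    (w : En n × En n) :
    IsIntegralCurve (fun t => χ t w) fun _ => hamiltonianField (quadHam (coeffForm a)) := by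
  rw [← ham_eq_quadHam_coeffForm]
  exact hχ.2 w

end Coordinates

theorem statement13_general (n : ℕ) :
    ∃ c₀ : ℝ, 0 < c₀ ∧ ∃ ε : ℝ, 0 < ε ∧ ∃ C : ℝ, 1 ≤ C ∧
      ∀ (μ : ℝ), 0 < μ →
      ∀ (a : Fin n → Fin n → En n → ℝ), (∀ i j, ContDiff ℝ 2 (a i j)) →
        (∀ i j x, |a i j x - (if i = j then (1 : ℝ) else 0)| + ‖fderiv ℝ (a i j) x‖ +
          ‖iteratedFDeriv ℝ 2 (a i j) x‖ ≤ c₀) →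
      ∀ (χ : ℝ → En n × En n → En n × En n), IsHamFlow a χ →
      ∀ (t : ℝ), 0 < t → t ≤ ε * μ⁻¹ →
      ∀ (x ξ η : En n), ‖ξ‖ ≤ 4 * μ → ‖η‖ ≤ 4 * μ →
        C⁻¹ * t * ‖ξ - η‖ ≤ ‖(χ t (x, ξ)).1 - (χ t (x, η)).1‖ ∧
          ‖(χ t (x, ξ)).1 - (χ t (x, η)).1‖ ≤ C * t * ‖ξ - η‖ := by
  refine ⟨1 / (16 * ((n : ℝ) ^ 2 + 1)), by positivity, 1 / 32, by norm_num, 3, by norm_num, ?_⟩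
  intro μ hμ a ha hc χ hχ t ht htμ x ξ η hξ hη
  have hκ : (n : ℝ) ^ 2 * (1 / (16 * ((n : ℝ) ^ 2 + 1))) ≤ 1 / 16 := by
    rw [mul_one_div, div_le_div_iff₀ (by positivity) (by norm_num)]
    linarith
  have htR : t * (8 * μ) ≤ 1 / 4 := by
    rw [← div_eq_mul_inv, le_div_iff₀ hμ] at htμ
    linarith
  have separation := (isNearEuclidean_coeffForm ha hc).norm_fst_sub_sub_two_mul_smul_le hκ
    (isIntegralCurve_of_isHamFlow hχ (x, ξ)) (isIntegralCurve_of_isHamFlow hχ (x, η))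
    (by simp only [hχ.1]) (by simp only [hχ.1]; linarith) (by simp only [hχ.1]; linarith) ht.le htR
  simp only [hχ.1] at separation
  have norm_main : ‖(2 * t) • (ξ - η)‖ = 2 * t * ‖ξ - η‖ := norm_smul_of_nonneg (by positivity) _
  have triangle := abs_le.1 ((abs_norm_sub_norm_le _ _).trans separation)
  have : 0 ≤ t * ‖ξ - η‖ := by positivity
  constructor <;> linarith

/-- Comparability of the spatial separation of Hamiltonian trajectories
with the frequency separation: if in addition `‖aⁱʲ − δᵢⱼ‖_{C²} ≤ c₀`, then for
`0 < t ≤ ε μ⁻¹` and `ξ, η` in the annulus `{μ/4 ≤ |·| ≤ 4μ}`,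
`C⁻¹ t |ξ − η| ≤ |z_t(x,ξ) − z_t(x,η)| ≤ C t |ξ − η|`. -/
theorem statement13 {n : ℕ} (hn : 2 ≤ n) (Cα : ℕ → ℝ) :
    ∃ c₀ : ℝ, 0 < c₀ ∧ ∃ ε : ℝ, 0 < ε ∧ ∃ C : ℝ, 1 ≤ C ∧
      ∀ (μ : ℝ), 1 ≤ μ →
      ∀ (a : Fin n → Fin n → En n → ℝ), HamSetup μ Cα a →
        (∀ i j x, |a i j x - (if i = j then (1 : ℝ) else 0)| + ‖fderiv ℝ (a i j) x‖ +
          ‖iteratedFDeriv ℝ 2 (a i j) x‖ ≤ c₀) →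
      ∀ (χ : ℝ → En n × En n → En n × En n), IsHamFlow a χ →
      ∀ (t : ℝ), 0 < t → t ≤ ε * μ⁻¹ →
      ∀ (x ξ η : En n), μ / 4 ≤ ‖ξ‖ → ‖ξ‖ ≤ 4 * μ → μ / 4 ≤ ‖η‖ → ‖η‖ ≤ 4 * μ →
        C⁻¹ * t * ‖ξ - η‖ ≤ ‖(χ t (x, ξ)).1 - (χ t (x, η)).1‖ ∧
          ‖(χ t (x, ξ)).1 - (χ t (x, η)).1‖ ≤ C * t * ‖ξ - η‖ := by
  obtain ⟨c₀, hc₀, ε, hε, C, hC, comparable⟩ := statement13_general n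
  exact ⟨c₀, hc₀, ε, hε, C, hC, fun μ hμ a ha hc χ hχ t ht htμ x ξ η _ hξ _ hη =>
    comparable μ (zero_lt_one.trans_le hμ) a (fun i j => (ha.1 i j).of_le (by norm_cast)) hc χ hχ
      t ht htμ x ξ η hξ hη⟩
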